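/- arXiv:1704.07995 — 5 statements merged into one kernel-verified Lean document; each statement's English description precedes it below -/
import Mathlib

section
/- Let 0 < α < 1 and T > 0, and let u : [0,T] → ℝ be absolutely continuous (differentiable with derivative integrable on [0,T]). Then for every t ∈ (0,T], (1/2) · (1/Γ(1-α)) ∫₀ᵗ (t-s)^{-α} (d/ds)(u(s)²) ds ≤ u(t) · (1/Γ(1-α)) ∫₀ᵗ (t-s)^{-α} u'(s) ds; that is, (1/2) · ᶜD₀ᵅ(u²)(t) ≤ u(t) · ᶜD₀ᵅu(t). -/
open Set Filter Topology MeasureTheory in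
lemma caputo_kernel_cont (α t : ℝ) {x : ℝ} (hx : x < t) :
    ContinuousOn (fun s : ℝ => (t - s) ^ (-α)) (Iic x) := by
  apply ContinuousOn.rpow_const
  · fun_prop
  · intro s hs
    left
    have : s ≤ x := hs
    linarith

open Set Filter Topology MeasureTheory in
lemma caputo_partial (α t : ℝ) (hα0 : 0 < α) (v : ℝ → ℝ)
    (hdiff : ∀ s ∈ Icc (0 : ℝ) t, DifferentiableAt ℝ v s)
    (hint : IntervalIntegrable (deriv v) volume 0 t) (x : ℝ) (hx0 : 0 ≤ x) (hx : x < t) :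
    ∫ s in (0 : ℝ)..x, (t - s) ^ (-α) * (v s * deriv v s) ≤ (t - x) ^ (-α) * v x ^ 2 / 2 := by
  have hvc : ContinuousOn v (Icc 0 x) := fun s hs =>
    (hdiff s ⟨hs.1, hs.2.trans hx.le⟩).continuousAt.continuousWithinAt
  have hk := (caputo_kernel_cont α t hx).mono (Icc_subset_Iic_self (a := 0))
  have hk' : ContinuousOn (fun s : ℝ => (t - s) ^ (-α - 1)) (Icc 0 x) := by
    have := (caputo_kernel_cont (α + 1) t hx).mono (Icc_subset_Iic_self (a := 0))
    have e : -(α + 1) = -α - 1 := by ring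
    rwa [e] at this
  have hi1 : IntervalIntegrable (fun s => (t - s) ^ (-α) * (v s * deriv v s)) volume 0 x := by
    have h1 : IntervalIntegrable (deriv v) volume 0 x :=
      hint.mono_set (by rw [uIcc_of_le hx0, uIcc_of_le (hx0.trans hx.le)]
                        exact Icc_subset_Icc_right hx.le)
    have h2 := h1.continuousOn_mul (g := fun s => (t - s) ^ (-α) * v s)
      (by rw [uIcc_of_le hx0]; exact hk.mul hvc)
    simpa only [mul_assoc] using h2
  have hi2 : IntervalIntegrable (fun s => α * (t - s) ^ (-α - 1) * v s ^ 2 / 2) volume 0 x := by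
    apply ContinuousOn.intervalIntegrable
    rw [uIcc_of_le hx0]
    exact ((continuousOn_const.mul hk').mul (hvc.pow 2)).div_const 2
  have hd : ∀ s ∈ uIcc 0 x, HasDerivAt (fun s => (t - s) ^ (-α) * v s ^ 2 / 2)
      ((t - s) ^ (-α) * (v s * deriv v s) + α * (t - s) ^ (-α - 1) * v s ^ 2 / 2) s := by
    intro s hs
    rw [uIcc_of_le hx0] at hs
    have hv := (hdiff s ⟨hs.1, hs.2.trans hx.le⟩).hasDerivAt
    have h1 : HasDerivAt (fun s : ℝ => t - s) (-1) s := by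
      simpa using (hasDerivAt_id s).const_sub t
    have h2 := h1.rpow_const (p := -α) (Or.inl (by have := hs.2; linarith))
    have h3 := (h2.mul (hv.pow 2)).div_const 2
    refine h3.congr_deriv ?_
    simp
    ring
  have hftc := intervalIntegral.integral_eq_sub_of_hasDerivAt hd (hi1.add hi2)
  rw [intervalIntegral.integral_add hi1 hi2] at hftc
  have hp : 0 ≤ ∫ s in (0 : ℝ)..x, α * (t - s) ^ (-α - 1) * v s ^ 2 / 2 := by
    apply intervalIntegral.integral_nonneg hx0
    intro s hs
    have : 0 ≤ t - s := by have := hs.2; linarith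
    positivity
  have h0 : 0 ≤ (t - 0) ^ (-α) * v 0 ^ 2 / 2 := by
    have : 0 ≤ t - 0 := by linarith
    positivity
  linarith

open Set Filter Topology MeasureTheory in
lemma caputo_nonpos (α t : ℝ) (hα0 : 0 < α) (hα1 : α < 1) (ht : 0 < t) (v : ℝ → ℝ)
    (hdiff : ∀ s ∈ Icc (0 : ℝ) t, DifferentiableAt ℝ v s)
    (hint : IntervalIntegrable (deriv v) volume 0 t) (hvt : v t = 0) :
    ∫ s in (0 : ℝ)..t, (t - s) ^ (-α) * (v s * deriv v s) ≤ 0 := by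
  by_cases hi : IntervalIntegrable (fun s => (t - s) ^ (-α) * (v s * deriv v s)) volume 0 t
  swap
  · rw [intervalIntegral.integral_undef hi]
  have hF := intervalIntegral.continuousOn_primitive_interval' hi left_mem_uIcc
  have hF' : Tendsto (fun x => ∫ s in (0 : ℝ)..x, (t - s) ^ (-α) * (v s * deriv v s)) (𝓝[<] t)
      (𝓝 (∫ s in (0 : ℝ)..t, (t - s) ^ (-α) * (v s * deriv v s))) := by
    have := hF t right_mem_uIcc
    rw [uIcc_of_le ht.le] at this
    refine Tendsto.mono_left this ?_
    rw [← nhdsWithin_Ioo_eq_nhdsLT ht]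
    exact nhdsWithin_mono _ Ioo_subset_Icc_self
  have hG : Tendsto (fun x => (t - x) ^ (-α) * v x ^ 2 / 2) (𝓝[<] t) (𝓝 0) := by
    have hs : Tendsto (slope v t) (𝓝[<] t) (𝓝 (deriv v t)) :=
      (hasDerivAt_iff_tendsto_slope.1 (hdiff t ⟨ht.le, le_rfl⟩).hasDerivAt).mono_left
        (nhdsWithin_mono _ (fun x hx => ne_of_lt hx))
    have hp : Tendsto (fun x : ℝ => (t - x) ^ (2 - α)) (𝓝[<] t) (𝓝 0) := by
      have hc : Continuous (fun x : ℝ => (t - x) ^ (2 - α)) :=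
        (continuous_const.sub continuous_id).rpow_const (fun _ => Or.inr (by linarith))
      have := hc.tendsto t
      rw [sub_self, Real.zero_rpow (by linarith)] at this
      exact this.mono_left nhdsWithin_le_nhds
    have := ((hs.pow 2).mul hp).div_const 2
    rw [mul_zero, zero_div] at this
    refine this.congr' ?_
    filter_upwards [self_mem_nhdsWithin] with x hx
    have hx' : 0 < t - x := sub_pos.2 hx
    have hx2 : x - t ≠ 0 := by linarith
    rw [slope_def_field, hvt, sub_zero, show 2 - α = -α + (2 : ℕ) by push_cast; ring,
      Real.rpow_add_natCast hx'.ne']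
    field_simp
    ring
  refine le_of_tendsto_of_tendsto hF' hG ?_
  filter_upwards [Ioo_mem_nhdsLT ht] with x hx
  exact caputo_partial α t hα0 v hdiff hint x hx.1.le hx.2

open Set Filter Topology MeasureTheory in
lemma caputo_integrable (α t : ℝ) (ht : 0 < t) (u : ℝ → ℝ)
    (hdiff : ∀ s ∈ Icc (0 : ℝ) t, DifferentiableAt ℝ u s)
    (hint : IntervalIntegrable (deriv u) volume 0 t) (hut : u t ≠ 0)
    (hg : IntervalIntegrable (fun s => (t - s) ^ (-α) * (u s * deriv u s)) volume 0 t) :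
    IntervalIntegrable (fun s => (t - s) ^ (-α) * deriv u s) volume 0 t := by
  have hne : ∀ᶠ x in 𝓝[≤] t, u x ≠ 0 :=
    ((hdiff t ⟨ht.le, le_rfl⟩).continuousAt.eventually_ne hut).filter_mono nhdsWithin_le_nhds
  obtain ⟨l, hl, hl2⟩ := (mem_nhdsLE_iff_exists_mem_Ico_Ioc_subset ht).1 hne
  obtain ⟨c, hc1, hc2⟩ := exists_between hl.2
  have hc0 : 0 ≤ c := hl.1.trans hc1.le
  have h1 : IntervalIntegrable (fun s => (t - s) ^ (-α) * deriv u s) volume 0 c := by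
    have h1 : IntervalIntegrable (deriv u) volume 0 c :=
      hint.mono_set (by rw [uIcc_of_le hc0, uIcc_of_le ht.le]
                        exact Icc_subset_Icc_right hc2.le)
    refine h1.continuousOn_mul ?_
    rw [uIcc_of_le hc0]
    exact (caputo_kernel_cont α t hc2).mono Icc_subset_Iic_self
  refine h1.trans ?_
  have hg' : IntervalIntegrable (fun s => (t - s) ^ (-α) * (u s * deriv u s)) volume c t :=
    hg.mono_set (by rw [uIcc_of_le hc2.le, uIcc_of_le ht.le]
                    exact Icc_subset_Icc_left hc0)
  have hnz : ∀ s ∈ Icc c t, u s ≠ 0 := fun s hs => hl2 ⟨hc1.trans_le hs.1, hs.2⟩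
  have h2 := hg'.continuousOn_mul (g := fun s => (u s)⁻¹) (by
    rw [uIcc_of_le hc2.le]
    exact ContinuousOn.inv₀ (fun s hs =>
      (hdiff s ⟨hc0.trans hs.1, hs.2⟩).continuousAt.continuousWithinAt) hnz)
  refine h2.congr ?_
  intro s hs
  rw [uIoc_of_le hc2.le] at hs
  have := hnz s ⟨hs.1.le, hs.2⟩
  simp only
  field_simp

/-- For `0 < α < 1` and an absolutely continuous `u` on `[0,T]`
(differentiable with integrable derivative), the Caputo fractional derivative of
order `α` satisfies `(1/2) ᶜD₀ᵅ(u²)(t) ≤ u(t) · ᶜD₀ᵅu(t)` for all `t ∈ (0,T]`. -/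
theorem caputo_square_inequality
    (α T : ℝ) (hα0 : 0 < α) (hα1 : α < 1) (hT : 0 < T)
    (u : ℝ → ℝ)
    (hdiff : ∀ s ∈ Set.Icc (0 : ℝ) T, DifferentiableAt ℝ u s)
    (hint : IntervalIntegrable (deriv u) MeasureTheory.volume 0 T) :
    ∀ t ∈ Set.Ioc (0 : ℝ) T,
      (1 / 2) * ((1 / Real.Gamma (1 - α)) *
          ∫ s in (0 : ℝ)..t, (t - s) ^ (-α) * deriv (fun s => (u s) ^ 2) s) ≤
        u t * ((1 / Real.Gamma (1 - α)) *
          ∫ s in (0 : ℝ)..t, (t - s) ^ (-α) * deriv u s) := by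
  intro t ht
  have ht0 : 0 < t := ht.1
  have hd : ∀ s ∈ Set.Icc (0 : ℝ) t, DifferentiableAt ℝ u s :=
    fun s hs => hdiff s ⟨hs.1, hs.2.trans ht.2⟩
  have hi : IntervalIntegrable (deriv u) MeasureTheory.volume 0 t :=
    hint.mono_set (by rw [Set.uIcc_of_le ht0.le, Set.uIcc_of_le hT.le]
                      exact Set.Icc_subset_Icc_right ht.2)
  have hG : 0 < 1 / Real.Gamma (1 - α) :=
    one_div_pos.2 (Real.Gamma_pos_of_pos (by linarith))
  have hsq : ∫ s in (0 : ℝ)..t, (t - s) ^ (-α) * deriv (fun s => (u s) ^ 2) s =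
      2 * ∫ s in (0 : ℝ)..t, (t - s) ^ (-α) * (u s * deriv u s) := by
    rw [← intervalIntegral.integral_const_mul]
    apply intervalIntegral.integral_congr
    intro s hs
    rw [Set.uIcc_of_le ht0.le] at hs
    have : deriv (fun s => (u s) ^ 2) s = 2 * u s * deriv u s := by
      have h := ((hd s hs).hasDerivAt.fun_pow 2).deriv
      simpa using h
    simp only [this]
    ring
  have hkey : ∫ s in (0 : ℝ)..t, (t - s) ^ (-α) * (u s * deriv u s) ≤
      u t * ∫ s in (0 : ℝ)..t, (t - s) ^ (-α) * deriv u s := by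
    have hdv : deriv (fun s => u s - u t) = deriv u := by
      funext s
      exact deriv_sub_const (u t)
    have hnp := caputo_nonpos α t hα0 hα1 ht0 (fun s => u s - u t)
      (fun s hs => (hd s hs).sub_const _) (by rwa [hdv]) (sub_self _)
    rw [hdv] at hnp
    by_cases hf : IntervalIntegrable (fun s => (t - s) ^ (-α) * deriv u s)
        MeasureTheory.volume 0 t
    · have hg : IntervalIntegrable (fun s => (t - s) ^ (-α) * (u s * deriv u s))
          MeasureTheory.volume 0 t := by
        have := hf.continuousOn_mul (g := u) (by
          rw [Set.uIcc_of_le ht0.le]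
          exact fun s hs => (hd s hs).continuousAt.continuousWithinAt)
        refine this.congr ?_
        intro s _
        simp only
        ring
      have e : ∀ s, (t - s) ^ (-α) * ((u s - u t) * deriv u s) =
          (t - s) ^ (-α) * (u s * deriv u s) - u t * ((t - s) ^ (-α) * deriv u s) := by
        intro s
        ring
      simp only [e] at hnp
      rw [intervalIntegral.integral_sub hg (hf.const_mul _),
        intervalIntegral.integral_const_mul] at hnp
      linarith
    · rw [intervalIntegral.integral_undef hf, mul_zero]
      by_cases hut : u t = 0
      · simpa [hut] using hnp
      · rw [intervalIntegral.integral_undef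
          (fun hg => hf (caputo_integrable α t ht0 u hd hi hut hg))]
  rw [hsq]
  have := mul_le_mul_of_nonneg_left hkey hG.le
  linarith
end

section
/- Let 0 < α < 1, λ ≥ 0, T > 0, and let u : [0,T] → ℝ be absolutely continuous with s ↦ e^{λs}u(s) having integrable derivative on [0,T]. Then for every t ∈ [0,T], the composite identity I₀^{α,λ}[ᶜD₀^{α,λ}u](t) = u(t) − e^{-λt} u(0) holds, i.e. (1/Γ(α)) ∫₀ᵗ e^{-λ(t-s)} (t-s)^{α-1} · ᶜD₀^{α,λ}u(s) ds = u(t) − e^{-λt} u(0). -/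
/-- The Caputo tempered fractional derivative of order `α ∈ (0,1)` with tempering
parameter `lam`:
`ᶜD₀^{α,λ}u(t) = (e^{-λt}/Γ(1-α)) ∫₀ᵗ (t-s)^{-α} (d/ds)(e^{λs} u(s)) ds`. -/
noncomputable def caputoTempered (α lam : ℝ) (u : ℝ → ℝ) (t : ℝ) : ℝ :=
  (Real.exp (-lam * t) / Real.Gamma (1 - α)) *
    ∫ s in (0 : ℝ)..t, (t - s) ^ (-α) * deriv (fun s => Real.exp (lam * s) * u s) s

open MeasureTheory in
theorem beta_aux (α r t : ℝ) (hα0 : 0 < α) (hα1 : α < 1) (h : r < t) :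
    ∫ s in r..t, (t - s) ^ (α - 1) * (s - r) ^ (-α) = Real.Gamma α * Real.Gamma (1 - α) := by
  have h1 : ∫ s in r..t, (t - s) ^ (α - 1) * (s - r) ^ (-α)
      = ∫ x in (0:ℝ)..(t - r), ((t - r) - x) ^ (α - 1) * x ^ (-α) := by
    have := intervalIntegral.integral_comp_sub_right (a := r) (b := t)
      (fun x : ℝ => ((t - r) - x) ^ (α - 1) * x ^ (-α)) r
    rw [sub_self] at this
    rw [← this]
    refine intervalIntegral.integral_congr fun s _ => ?_
    simp only [sub_sub_sub_cancel_right]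
  have hpos : 0 < t - r := sub_pos.2 h
  have h2 := Complex.betaIntegral_scaled ((1 - α : ℝ) : ℂ) ((α : ℝ) : ℂ) hpos
  have h3 := Complex.Gamma_mul_Gamma_eq_betaIntegral (s := ((1 - α : ℝ) : ℂ)) (t := ((α : ℝ) : ℂ))
    (by simpa using hα1) (by simpa using hα0)
  have e1 : ((1 - α : ℝ) : ℂ) + (α : ℂ) = 1 := by push_cast; ring
  rw [e1, Complex.Gamma_one, one_mul] at h3
  rw [e1, sub_self, Complex.cpow_zero, one_mul, ← h3] at h2
  rw [h1]
  apply Complex.ofReal_injective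
  rw [← intervalIntegral.integral_ofReal]
  rw [Complex.ofReal_mul, ← Complex.Gamma_ofReal, ← Complex.Gamma_ofReal, mul_comm, ← h2]
  refine intervalIntegral.integral_congr fun x hx => ?_
  rw [Set.uIcc_of_le hpos.le] at hx
  rw [Complex.ofReal_mul, Complex.ofReal_cpow hx.1, Complex.ofReal_cpow (sub_nonneg.2 hx.2), mul_comm]
  push_cast
  congr 2
  ring

open MeasureTheory in
theorem swap_aux (α t : ℝ) (hα0 : 0 < α) (hα1 : α < 1) (ht : 0 ≤ t) (g : ℝ → ℝ)
    (hg : IntervalIntegrable g volume 0 t) :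
    ∫ s in (0:ℝ)..t, (t - s) ^ (α - 1) * ∫ r in (0:ℝ)..s, (s - r) ^ (-α) * g r
      = Real.Gamma α * Real.Gamma (1 - α) * ∫ r in (0:ℝ)..t, g r := by
  set C := Real.Gamma α * Real.Gamma (1 - α) with hC
  have hCpos : 0 < C := mul_pos (Real.Gamma_pos_of_pos hα0) (Real.Gamma_pos_of_pos (by linarith))
  let G : ℝ → ℝ := (Set.Ioc 0 t).indicator g
  let K : ℝ → ℝ → ℝ := fun r s => (Set.Ioc r t).indicator
    (fun s => (t - s) ^ (α - 1) * (s - r) ^ (-α)) s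
  have hG : Integrable G := by
    rw [integrable_indicator_iff measurableSet_Ioc]
    exact (intervalIntegrable_iff_integrableOn_Ioc_of_le ht).1 hg
  have hKint : ∀ r, r < t → ∫ s, K r s = C := fun r hr => by
    rw [integral_indicator measurableSet_Ioc, ← intervalIntegral.integral_of_le hr.le]
    exact beta_aux α r t hα0 hα1 hr
  have hKI : ∀ r, r < t → Integrable (K r) := fun r hr => by
    by_contra hcon
    have := hKint r hr
    rw [integral_undef hcon] at this
    exact hCpos.ne this
  have hK0 : ∀ r, t ≤ r → K r = fun _ => 0 := fun r hr => by
    funext s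
    simp [K, Set.Ioc_eq_empty (not_lt.2 hr)]
  have hKnn : ∀ r s, 0 ≤ K r s := fun r s => by
    refine Set.indicator_nonneg (fun s hs => ?_) s
    exact mul_nonneg (Real.rpow_nonneg (sub_nonneg.2 hs.2) _)
      (Real.rpow_nonneg (sub_nonneg.2 hs.1.le) _)
  have hKm : Measurable (Function.uncurry K) := by
    have : Function.uncurry K = Set.indicator {p : ℝ × ℝ | p.1 < p.2 ∧ p.2 ≤ t}
        (fun p => (t - p.2) ^ (α - 1) * (p.2 - p.1) ^ (-α)) := by
      funext p
      rfl
    rw [this]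
    refine Measurable.indicator (by fun_prop) ?_
    exact (measurableSet_lt measurable_fst measurable_snd).inter
      (measurableSet_le measurable_snd measurable_const)
  have hsec : ∀ r, r ≠ t → G r * ∫ s, K r s = C * G r := fun r hr => by
    rcases lt_or_gt_of_ne hr with h | h
    · rw [hKint r h, mul_comm]
    · have : G r = 0 := Set.indicator_of_notMem (fun hh => absurd hh.2 (not_le.2 h)) _
      simp [this]
  have hae : ∀ᵐ r : ℝ, r ≠ t := by
    simp [ae_iff]
  have hF : Integrable (Function.uncurry fun r s => G r * K r s)
      ((volume : Measure ℝ).prod (volume : Measure ℝ)) := by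
    rw [integrable_prod_iff]
    · refine ⟨Filter.Eventually.of_forall fun r => ?_, ?_⟩
      · refine Integrable.const_mul (f := K r) ?_ (G r)
        rcases lt_or_ge r t with h | h
        · exact hKI r h
        · simp only [hK0 r h]
          exact integrable_zero _ _ _
      · refine (hG.norm.const_mul C).congr ?_
        filter_upwards [hae] with r hr
        simp only [Function.uncurry_apply_pair, norm_mul, integral_const_mul]
        have h1 : ∀ s, ‖K r s‖ = K r s := fun s => Real.norm_of_nonneg (hKnn r s)
        simp only [h1]
        have h2 := congrArg norm (hsec r hr)
        rw [norm_mul, norm_mul, Real.norm_of_nonneg hCpos.le,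
          Real.norm_of_nonneg (integral_nonneg (hKnn r))] at h2
        exact h2.symm
    · exact hG.aestronglyMeasurable.comp_fst.mul hKm.aestronglyMeasurable
  have hswap := integral_integral_swap hF
  have hR : ∫ r, ∫ s, G r * K r s = C * ∫ r in (0:ℝ)..t, g r := by
    rw [intervalIntegral.integral_of_le ht, ← integral_indicator measurableSet_Ioc,
      ← integral_const_mul]
    refine integral_congr_ae ?_
    filter_upwards [hae] with r hr
    rw [integral_const_mul]
    exact hsec r hr
  rw [← hR, hswap, intervalIntegral.integral_of_le ht, ← integral_indicator measurableSet_Ioc]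
  congr 1
  funext s
  by_cases hs : s ∈ Set.Ioc 0 t
  · rw [Set.indicator_of_mem hs, intervalIntegral.integral_of_le hs.1.le,
      ← integral_indicator measurableSet_Ioc, ← integral_const_mul]
    congr 1
    funext r
    by_cases hr : r ∈ Set.Ioc 0 s
    · rw [Set.indicator_of_mem hr]
      have hGr : G r = g r := Set.indicator_of_mem (show r ∈ Set.Ioc 0 t from ⟨hr.1, hr.2.trans hs.2⟩) _
      rcases hr.2.lt_or_eq with h | h
      · have : K r s = (t - s) ^ (α - 1) * (s - r) ^ (-α) :=
          Set.indicator_of_mem (show s ∈ Set.Ioc r t from ⟨h, hs.2⟩) _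
        rw [hGr, this]
        ring
      · have : K r s = 0 := Set.indicator_of_notMem (fun hh => absurd hh.1 (by simp [h])) _
        rw [this, h, sub_self, Real.zero_rpow (by linarith)]
        simp
    · rw [Set.indicator_of_notMem hr, mul_zero]
      rcases le_or_gt r 0 with h | h
      · have : G r = 0 := Set.indicator_of_notMem (fun hh => absurd hh.1 (not_lt.2 h)) _
        rw [this, zero_mul]
      · have : K r s = 0 := Set.indicator_of_notMem (fun hh => hr ⟨h, hh.1.le⟩) _
        rw [this, mul_zero]
  · rw [Set.indicator_of_notMem hs]
    symm
    have : ∀ r, G r * K r s = 0 := fun r => by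
      by_cases hr : r ∈ Set.Ioc 0 t
      · have : K r s = 0 := Set.indicator_of_notMem
          (fun hh => hs ⟨hr.1.trans hh.1, hh.2⟩) _
        rw [this, mul_zero]
      · have : G r = 0 := Set.indicator_of_notMem hr _
        rw [this, zero_mul]
    simp [this]

/-- Composite identity: the Riemann–Liouville tempered fractional
integral of order `α` of the Caputo tempered fractional derivative of order `α`
recovers `u(t) - e^{-λt} u(0)`. -/
theorem tempered_integral_caputo_composite
    (α lam T : ℝ) (hα0 : 0 < α) (hα1 : α < 1) (hlam : 0 ≤ lam) (hT : 0 < T)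
    (u : ℝ → ℝ)
    (hdiff : ∀ s ∈ Set.Icc (0 : ℝ) T, DifferentiableAt ℝ u s)
    (hint : IntervalIntegrable (deriv fun s => Real.exp (lam * s) * u s)
      MeasureTheory.volume 0 T) :
    ∀ t ∈ Set.Icc (0 : ℝ) T,
      (1 / Real.Gamma α) *
          ∫ s in (0 : ℝ)..t,
            Real.exp (-lam * (t - s)) * (t - s) ^ (α - 1) * caputoTempered α lam u s =
        u t - Real.exp (-lam * t) * u 0 := by
  intro t ht
  set g := deriv fun s => Real.exp (lam * s) * u s with hgdef
  have hsub : Set.uIcc 0 t ⊆ Set.uIcc 0 T := by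
    rw [Set.uIcc_of_le ht.1, Set.uIcc_of_le hT.le]
    exact Set.Icc_subset_Icc_right ht.2
  have hg := hint.mono_set hsub
  have hftc : ∫ r in (0:ℝ)..t, g r = Real.exp (lam * t) * u t - Real.exp (lam * 0) * u 0 := by
    refine intervalIntegral.integral_eq_sub_of_hasDerivAt
      (f := fun s => Real.exp (lam * s) * u s) (fun s hs => ?_) hg
    have hs' := hsub hs
    rw [Set.uIcc_of_le hT.le] at hs'
    refine DifferentiableAt.hasDerivAt (DifferentiableAt.mul (by fun_prop) (hdiff s hs'))
  have hsw := swap_aux α t hα0 hα1 ht.1 g hg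
  have hA := (Real.Gamma_pos_of_pos hα0).ne'
  have hB := (Real.Gamma_pos_of_pos (show 0 < 1 - α by linarith)).ne'
  have hrew : ∫ s in (0 : ℝ)..t,
      Real.exp (-lam * (t - s)) * (t - s) ^ (α - 1) * caputoTempered α lam u s
      = Real.exp (-lam * t) / Real.Gamma (1 - α) *
        ∫ s in (0:ℝ)..t, (t - s) ^ (α - 1) * ∫ r in (0:ℝ)..s, (s - r) ^ (-α) * g r := by
    rw [← intervalIntegral.integral_const_mul]
    refine intervalIntegral.integral_congr fun s _ => ?_
    have he : Real.exp (-lam * t) = Real.exp (-lam * (t - s)) * Real.exp (-lam * s) := by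
      rw [← Real.exp_add]
      congr 1
      ring
    simp only [caputoTempered]
    rw [he, ← hgdef]
    ring
  rw [hrew, hsw, hftc]
  have he : Real.exp (-lam * t) * Real.exp (lam * t) = 1 := by
    rw [← Real.exp_add]
    simp
  rw [mul_zero, Real.exp_zero]
  have hn : Real.exp (-lam * t) = Real.exp (-(lam * t)) := by rw [neg_mul]
  rw [hn] at he ⊢
  field_simp
  linear_combination u t * he
end

section
/- (Fractional Gronwall inequality.) Let 0 ≤ α < 1, T > 0, let u : [0,T] → ℝ be continuous and non-negative, let φ : [0,T] → ℝ be non-negative, monotonically increasing and continuous, and let M > 0. If u(t) ≤ φ(t) + M ∫₀ᵗ u(s) (t-s)^{-α} ds for all 0 ≤ t ≤ T, then u(t) ≤ φ(t) · E_{1-α}( M Γ(1-α) t^{1-α} ) for all 0 ≤ t < T, where E_{1-α} is the Mittag-Leffler function. -/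
/-- The Mittag-Leffler function `E_β(z) = Σ_{k=0}^∞ z^k / Γ(βk + 1)`. -/
noncomputable def mittagLeffler (β z : ℝ) : ℝ :=
  ∑' k : ℕ, z ^ k / Real.Gamma (β * k + 1)

theorem fg_gamma_lower (s R : ℝ) (hs : 0 ≤ s) (hR : 0 < R) :
    Real.exp (-(R + 1)) * R ^ s ≤ Real.Gamma (s + 1) := by
  rw [Real.Gamma_eq_integral (by linarith)]
  have hint := Real.GammaIntegral_convergent (s := s + 1) (by linarith)
  have hsub : Set.Ioc R (R + 1) ⊆ Set.Ioi 0 := fun x hx => lt_trans hR hx.1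
  have h1 : ∫ x in Set.Ioc R (R + 1), Real.exp (-x) * x ^ (s + 1 - 1) ≤
      ∫ x in Set.Ioi 0, Real.exp (-x) * x ^ (s + 1 - 1) := by
    apply MeasureTheory.setIntegral_mono_set hint
    · filter_upwards [MeasureTheory.ae_restrict_mem measurableSet_Ioi] with x hx
      have : (0 : ℝ) < x := hx
      simp only [Pi.zero_apply]
      positivity
    · exact hsub.eventuallyLE
  refine le_trans ?_ h1
  have h2 : ∫ x in Set.Ioc R (R + 1), Real.exp (-(R + 1)) * R ^ s ≤
      ∫ x in Set.Ioc R (R + 1), Real.exp (-x) * x ^ (s + 1 - 1) := by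
    apply MeasureTheory.setIntegral_mono_on
    · exact MeasureTheory.integrableOn_const (by simp)
    · exact hint.mono_set hsub
    · exact measurableSet_Ioc
    · intro x hx
      rw [add_sub_cancel_right]
      have := hx.1
      have := hx.2
      gcongr
  refine le_trans (le_of_eq ?_) h2
  simp

theorem fg_summable (β z : ℝ) (hβ : 0 < β) (hz : 0 ≤ z) :
    Summable (fun k : ℕ => z ^ k / Real.Gamma (β * k + 1)) := by
  set R : ℝ := (2 * z + 1) ^ (1 / β) with hRdef
  have hR : 0 < R := by positivity
  have hRβ : R ^ β = 2 * z + 1 := by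
    rw [hRdef, ← Real.rpow_mul (by positivity), one_div_mul_cancel hβ.ne', Real.rpow_one]
  have hpos : ∀ k : ℕ, 0 < Real.Gamma (β * k + 1) := fun k => Real.Gamma_pos_of_pos (by positivity)
  refine Summable.of_nonneg_of_le (f := fun k : ℕ => Real.exp (R + 1) * (1 / 2 : ℝ) ^ k)
    (fun k => div_nonneg (pow_nonneg hz k) (hpos k).le) (fun k => ?_)
    (summable_geometric_two.mul_left _)
  rw [div_le_iff₀ (hpos k)]
  have h1 := fg_gamma_lower (β * k) R (by positivity) hR
  rw [Real.rpow_mul_natCast hR.le, hRβ] at h1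
  have h2 : z ^ k ≤ (1 / 2 : ℝ) ^ k * (2 * z + 1) ^ k := by
    rw [← mul_pow]
    exact pow_le_pow_left₀ hz (by linarith) k
  calc z ^ k ≤ (1 / 2 : ℝ) ^ k * (2 * z + 1) ^ k := h2
    _ = Real.exp (R + 1) * (1 / 2 : ℝ) ^ k * (Real.exp (-(R + 1)) * (2 * z + 1) ^ k) := by
      have : Real.exp (R + 1) * Real.exp (-(R + 1)) = 1 := by rw [← Real.exp_add]; simp
      linear_combination (-(1 / 2 : ℝ) ^ k * (2 * z + 1) ^ k) * this
    _ ≤ _ := by gcongr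

theorem fg_beta (p q a : ℝ) (hp : 0 < p) (hq : 0 < q) (ha : 0 < a) :
    ∫ x in (0 : ℝ)..a, x ^ (p - 1) * (a - x) ^ (q - 1) =
      a ^ (p + q - 1) * (Real.Gamma p * Real.Gamma q / Real.Gamma (p + q)) := by
  have h1 := Complex.betaIntegral_scaled p q ha
  have h2 := Complex.Gamma_mul_Gamma_eq_betaIntegral (s := p) (t := q) (by simpa) (by simpa)
  have hg : Real.Gamma (p + q) ≠ 0 := (Real.Gamma_pos_of_pos (by linarith)).ne'
  have h3 : Complex.betaIntegral p q =
      ((Real.Gamma p * Real.Gamma q / Real.Gamma (p + q) : ℝ) : ℂ) := by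
    rw [← Complex.ofReal_add, Complex.Gamma_ofReal, Complex.Gamma_ofReal, Complex.Gamma_ofReal] at h2
    push_cast
    rw [h2, mul_div_cancel_left₀]
    exact_mod_cast hg
  rw [h3] at h1
  apply Complex.ofReal_injective
  rw [← intervalIntegral.integral_ofReal, Complex.ofReal_mul, Complex.ofReal_cpow ha.le]
  push_cast at h1 ⊢
  rw [← h1]
  apply intervalIntegral.integral_congr
  intro x hx
  rw [Set.uIcc_of_le ha.le] at hx
  simp only
  rw [Complex.ofReal_cpow hx.1, Complex.ofReal_cpow (by linarith [hx.2])]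
  push_cast
  rfl

theorem fg_kernel_int (α s : ℝ) (hα1 : α < 1) :
    IntervalIntegrable (fun r : ℝ => (s - r) ^ (-α)) MeasureTheory.volume 0 s := by
  have := (intervalIntegral.intervalIntegrable_rpow' (a := s) (b := 0) (r := -α) (by linarith)).comp_sub_left s
  simpa using this

theorem fg_step (α M s : ℝ) (hα1 : α < 1) (hs : 0 ≤ s) (k : ℕ) :
    M * ∫ r in (0 : ℝ)..s, (M * Real.Gamma (1 - α) * r ^ (1 - α)) ^ k /
        Real.Gamma ((1 - α) * k + 1) * (s - r) ^ (-α) =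
      (M * Real.Gamma (1 - α) * s ^ (1 - α)) ^ (k + 1) /
        Real.Gamma ((1 - α) * (k + 1 : ℕ) + 1) := by
  have hβ : 0 < 1 - α := by linarith
  rcases hs.eq_or_lt with rfl | hs
  · simp [Real.zero_rpow hβ.ne']
  have hk : 0 < (1 - α) * k + 1 := by positivity
  have hb := fg_beta ((1 - α) * k + 1) (1 - α) s hk hβ hs
  have hg := (Real.Gamma_pos_of_pos hk).ne'
  have e : ∫ r in (0 : ℝ)..s, (M * Real.Gamma (1 - α) * r ^ (1 - α)) ^ k /
        Real.Gamma ((1 - α) * k + 1) * (s - r) ^ (-α) =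
      ∫ r in (0 : ℝ)..s, ((M * Real.Gamma (1 - α)) ^ k / Real.Gamma ((1 - α) * k + 1)) *
        (r ^ ((1 - α) * k + 1 - 1) * (s - r) ^ (1 - α - 1)) := by
    apply intervalIntegral.integral_congr
    intro r hr
    rw [Set.uIcc_of_le hs.le] at hr
    simp only
    rw [add_sub_cancel_right, Real.rpow_mul_natCast hr.1, mul_pow,
      show 1 - α - 1 = -α by ring]
    ring
  rw [e, intervalIntegral.integral_const_mul, hb,
    show (1 - α) * k + 1 + (1 - α) - 1 = (1 - α) * (k + 1 : ℕ) by push_cast; ring,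
    show (1 - α) * k + 1 + (1 - α) = (1 - α) * (k + 1 : ℕ) + 1 by push_cast; ring,
    Real.rpow_mul_natCast hs.le]
  field_simp
  ring

/-- Fractional Gronwall inequality: if `u` is continuous and
non-negative on `[0,T]`, `φ` is non-negative, monotonically increasing and
continuous on `[0,T]`, `M > 0`, and
`u(t) ≤ φ(t) + M ∫₀ᵗ u(s)(t-s)^{-α} ds` on `[0,T]`, then
`u(t) ≤ φ(t) · E_{1-α}(M Γ(1-α) t^{1-α})` on `[0,T)`. -/
theorem fractional_gronwall
    (α T M : ℝ) (hα0 : 0 ≤ α) (hα1 : α < 1) (hT : 0 < T) (hM : 0 < M)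
    (u φ : ℝ → ℝ)
    (hu_cont : ContinuousOn u (Set.Icc 0 T))
    (hu_nonneg : ∀ t ∈ Set.Icc (0 : ℝ) T, 0 ≤ u t)
    (hφ_nonneg : ∀ t ∈ Set.Icc (0 : ℝ) T, 0 ≤ φ t)
    (hφ_mono : MonotoneOn φ (Set.Icc 0 T))
    (hφ_cont : ContinuousOn φ (Set.Icc 0 T))
    (h : ∀ t ∈ Set.Icc (0 : ℝ) T,
      u t ≤ φ t + M * ∫ s in (0 : ℝ)..t, u s * (t - s) ^ (-α)) :
    ∀ t ∈ Set.Ico (0 : ℝ) T,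
      u t ≤ φ t * mittagLeffler (1 - α) (M * Real.Gamma (1 - α) * t ^ (1 - α)) := by
  intro t ht
  have hβ : 0 < 1 - α := by linarith
  have hΓ : 0 < Real.Gamma (1 - α) := Real.Gamma_pos_of_pos hβ
  obtain ⟨C, hC⟩ := (isCompact_Icc.bddAbove_image hu_cont)
  have hC' : ∀ s ∈ Set.Icc (0 : ℝ) T, u s ≤ C := fun s hs => hC ⟨s, hs, rfl⟩
  have htT : t ∈ Set.Icc (0 : ℝ) T := ⟨ht.1, ht.2.le⟩
  set F : ℕ → ℝ → ℝ := fun k r => (M * Real.Gamma (1 - α) * r ^ (1 - α)) ^ k /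
        Real.Gamma ((1 - α) * k + 1) with hF
  have hFc : ∀ k, Continuous (F k) := fun k =>
    ((continuous_const.mul (Real.continuous_rpow_const hβ.le)).pow k).div_const _
  have hFs : ∀ (k : ℕ) (s : ℝ), 0 ≤ s →
      M * ∫ r in (0 : ℝ)..s, F k r * (s - r) ^ (-α) = F (k + 1) s :=
    fun k s hs => fg_step α M s hα1 hs k
  have hF0 : ∀ s, F 0 s = 1 := fun s => by simp [hF]
  have key : ∀ n : ℕ, ∀ s ∈ Set.Icc 0 t,
      u s ≤ φ t * ∑ k ∈ Finset.range n, F k s + C * F n s := by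
    intro n
    induction n with
    | zero =>
      intro s hs
      simpa [hF0] using hC' s ⟨hs.1, hs.2.trans ht.2.le⟩
    | succ n ih =>
      intro s hs
      have hsT : s ∈ Set.Icc (0 : ℝ) T := ⟨hs.1, hs.2.trans ht.2.le⟩
      have hker := fg_kernel_int α s hα1
      have hI : ∀ k, IntervalIntegrable (fun r => F k r * (s - r) ^ (-α))
          MeasureTheory.volume 0 s := fun k => hker.continuousOn_mul (hFc k).continuousOn
      have hmono : ∫ r in (0 : ℝ)..s, u r * (s - r) ^ (-α) ≤
          ∫ r in (0 : ℝ)..s, (φ t * ∑ k ∈ Finset.range n, F k r * (s - r) ^ (-α)) +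
            C * (F n r * (s - r) ^ (-α)) := by
        apply intervalIntegral.integral_mono_on hs.1
        · apply hker.continuousOn_mul
          rw [Set.uIcc_of_le hs.1]
          exact hu_cont.mono (Set.Icc_subset_Icc le_rfl hsT.2)
        · refine IntervalIntegrable.add (IntervalIntegrable.const_mul ?_ _) ((hI n).const_mul _)
          have := IntervalIntegrable.sum (Finset.range n) (fun k _ => hI k)
          simpa [Finset.sum_fn] using this
        · intro r hr
          have h1 := ih r ⟨hr.1, hr.2.trans hs.2⟩
          have h2 : 0 ≤ (s - r) ^ (-α) := Real.rpow_nonneg (by linarith [hr.2]) _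
          calc _ ≤ _ := mul_le_mul_of_nonneg_right h1 h2
            _ = _ := by rw [← Finset.sum_mul]; ring
      rw [intervalIntegral.integral_add, intervalIntegral.integral_const_mul,
        intervalIntegral.integral_const_mul, intervalIntegral.integral_finsetSum
          (fun k _ => hI k)] at hmono
      rotate_left
      · refine IntervalIntegrable.const_mul ?_ _
        have := IntervalIntegrable.sum (Finset.range n) (fun k _ => hI k)
        simpa [Finset.sum_fn] using this
      · exact (hI n).const_mul _
      have h3 := mul_le_mul_of_nonneg_left hmono hM.le
      have h4 : M * ∑ k ∈ Finset.range n, ∫ r in (0 : ℝ)..s, F k r * (s - r) ^ (-α) =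
          ∑ k ∈ Finset.range n, F (k + 1) s := by
        rw [Finset.mul_sum]
        exact Finset.sum_congr rfl fun k _ => hFs k s hs.1
      have h5 := hFs n s hs.1
      have h6 := h s hsT
      have h7 := hφ_mono hsT htT hs.2
      rw [Finset.sum_range_succ', hF0, ← h4, ← h5]
      linarith
  have hsum : Summable (fun k => F k t) := fg_summable (1 - α) _ hβ
    (mul_nonneg (mul_nonneg hM.le hΓ.le) (Real.rpow_nonneg ht.1 _))
  have hlim : Filter.Tendsto (fun n => φ t * ∑ k ∈ Finset.range n, F k t + C * F n t)
      Filter.atTop (nhds (φ t * (∑' k, F k t) + C * 0)) :=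
    (hsum.hasSum.tendsto_sum_nat.const_mul _).add (hsum.tendsto_atTop_zero.const_mul _)
  have hfin := ge_of_tendsto' hlim (fun n => key n t ⟨ht.1, le_rfl⟩)
  rw [mul_zero, add_zero] at hfin
  exact hfin
end

section
/- Let 0 < α < 1 and define the Grünwald weights w_k = (-1)^k · C(α, k) for k ∈ ℕ, where C(α, k) is the generalized binomial coefficient. Then for every n ≥ 1: Σ_{k=0}^{n-1} w_k = - Σ_{k=n}^{∞} w_k, and 1/(n^{α} Γ(1-α)) < Σ_{k=0}^{n-1} w_k ≤ 1/n^{α}, where Γ is the Gamma function. -/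
/-- The Grünwald weights `w_k = (-1)^k C(α, k)`, where
`C(α, k) = α(α-1)⋯(α-k+1)/k!` is the generalized binomial coefficient. -/
noncomputable def grunwaldWeight (α : ℝ) (k : ℕ) : ℝ :=
  (-1 : ℝ) ^ k * ((∏ i ∈ Finset.range k, (α - i)) / (k.factorial : ℝ))

lemma gw_succ (α : ℝ) (k : ℕ) :
    ((k : ℝ) + 1) * grunwaldWeight α (k + 1) = ((k : ℝ) - α) * grunwaldWeight α k := by
  unfold grunwaldWeight
  rw [Finset.prod_range_succ, Nat.factorial_succ, pow_succ]
  push_cast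
  have h1 : ((k : ℝ) + 1) ≠ 0 := by positivity
  have h2 : ((k.factorial : ℕ) : ℝ) ≠ 0 := by positivity
  field_simp
  ring

lemma gw_sum (α : ℝ) (n : ℕ) :
    ((n : ℝ) + 1) * grunwaldWeight α (n + 1)
      = -α * ∑ k ∈ Finset.range (n + 1), grunwaldWeight α k := by
  induction n with
  | zero => simp [grunwaldWeight]
  | succ n ih =>
    rw [gw_succ, Finset.sum_range_succ, mul_add, ← ih]
    push_cast
    ring

lemma gw_sum_succ (α : ℝ) (n : ℕ) :
    ∑ k ∈ Finset.range (n + 2), grunwaldWeight α k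
      = (1 - α / ((n : ℝ) + 1)) * ∑ k ∈ Finset.range (n + 1), grunwaldWeight α k := by
  have h1 : ((n : ℝ) + 1) ≠ 0 := by positivity
  have h := gw_sum α n
  rw [Finset.sum_range_succ]
  field_simp
  linear_combination h

lemma gw_sum_Gamma (α : ℝ) (hα1 : α < 1) (n : ℕ) :
    ∑ k ∈ Finset.range (n + 1), grunwaldWeight α k
      = Real.Gamma ((n : ℝ) + 1 - α) / (Real.Gamma ((n : ℝ) + 1) * Real.Gamma (1 - α)) := by
  have hG : Real.Gamma (1 - α) ≠ 0 := (Real.Gamma_pos_of_pos (by linarith)).ne'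
  induction n with
  | zero => simp [grunwaldWeight, hG]
  | succ n ih =>
    have hn : (0 : ℝ) ≤ n := n.cast_nonneg
    have h1 : ((n : ℝ) + 1) ≠ 0 := by positivity
    have hG2 : Real.Gamma ((n : ℝ) + 1) ≠ 0 := (Real.Gamma_pos_of_pos (by positivity)).ne'
    rw [gw_sum_succ, ih]
    push_cast
    rw [Real.Gamma_add_one h1,
      show (n : ℝ) + 1 + 1 - α = (n + 1 - α) + 1 by ring,
      Real.Gamma_add_one (s := (n : ℝ) + 1 - α) (by linarith)]
    field_simp

lemma gw_sum_pos (α : ℝ) (hα1 : α < 1) (n : ℕ) :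
    0 < ∑ k ∈ Finset.range (n + 1), grunwaldWeight α k := by
  have hn : (0 : ℝ) ≤ n := n.cast_nonneg
  rw [gw_sum_Gamma α hα1]
  have := Real.Gamma_pos_of_pos (s := (n : ℝ) + 1 - α) (by linarith)
  have := Real.Gamma_pos_of_pos (s := (n : ℝ) + 1) (by linarith)
  have := Real.Gamma_pos_of_pos (s := 1 - α) (by linarith)
  positivity

lemma gw_upper (α : ℝ) (hα0 : 0 < α) (hα1 : α < 1) (n : ℕ) :
    (∑ k ∈ Finset.range (n + 1), grunwaldWeight α k) * ((n : ℝ) + 1) ^ α ≤ 1 := by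
  induction n with
  | zero => simp [grunwaldWeight]
  | succ n ih =>
    have hn : (0 : ℝ) ≤ n := n.cast_nonneg
    have hp : (0 : ℝ) < n + 1 := by positivity
    have hS := gw_sum_pos α hα1 n
    rw [gw_sum_succ]
    push_cast
    have hx : α / ((n : ℝ) + 1) ≤ 1 := by rw [div_le_one hp]; linarith
    have hB := rpow_one_add_le_one_add_mul_self (s := 1 / ((n : ℝ) + 1)) (p := α)
      (by have : 0 < 1 / ((n : ℝ) + 1) := by positivity
          linarith) hα0.le hα1.le
    have he : ((n : ℝ) + 1 + 1) ^ α = ((n : ℝ) + 1) ^ α * (1 + 1 / ((n : ℝ) + 1)) ^ α := by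
      rw [← Real.mul_rpow hp.le (by positivity)]
      congr 1
      field_simp
    rw [he]
    set S := ∑ k ∈ Finset.range (n + 1), grunwaldWeight α k
    have hq : 0 < ((n : ℝ) + 1) ^ α := by positivity
    have hfac : (1 - α / ((n : ℝ) + 1)) * (1 + 1 / ((n : ℝ) + 1)) ^ α ≤ 1 := by
      calc _ ≤ (1 - α / ((n : ℝ) + 1)) * (1 + α * (1 / ((n : ℝ) + 1))) :=
            mul_le_mul_of_nonneg_left hB (by linarith)
        _ = 1 - (α / ((n : ℝ) + 1)) ^ 2 := by ring
        _ ≤ 1 := by nlinarith [sq_nonneg (α / ((n : ℝ) + 1))]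
    calc _ = (S * ((n : ℝ) + 1) ^ α) *
          ((1 - α / ((n : ℝ) + 1)) * (1 + 1 / ((n : ℝ) + 1)) ^ α) := by ring
      _ ≤ (S * ((n : ℝ) + 1) ^ α) * 1 :=
          mul_le_mul_of_nonneg_left hfac (by positivity)
      _ ≤ 1 := by linarith

lemma gw_lower (α : ℝ) (hα0 : 0 < α) (hα1 : α < 1) (n : ℕ) :
    Real.Gamma ((n : ℝ) + 1) < Real.Gamma ((n : ℝ) + 1 - α) * ((n : ℝ) + 1) ^ α := by
  have hn : (0 : ℝ) ≤ n := n.cast_nonneg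
  have hs : 0 < (n : ℝ) + 1 - α := by linarith
  have hG := Real.Gamma_pos_of_pos hs
  have h := Real.Gamma_mul_add_mul_le_rpow_Gamma_mul_rpow_Gamma (s := (n : ℝ) + 1 - α)
    (t := (n : ℝ) + 1 - α + 1) (a := 1 - α) (b := α) hs (by linarith) (by linarith) hα0 (by ring)
  rw [Real.Gamma_add_one hs.ne', Real.mul_rpow hs.le hG.le,
    show (1 - α) * ((n : ℝ) + 1 - α) + α * (n + 1 - α + 1) = n + 1 by ring] at h
  have h2 : Real.Gamma ((n : ℝ) + 1 - α) ^ (1 - α) * Real.Gamma ((n : ℝ) + 1 - α) ^ α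
      = Real.Gamma ((n : ℝ) + 1 - α) := by
    rw [← Real.rpow_add hG]; simp
  calc _ ≤ _ := h
    _ = (Real.Gamma ((n : ℝ) + 1 - α) ^ (1 - α) * Real.Gamma ((n : ℝ) + 1 - α) ^ α)
        * ((n : ℝ) + 1 - α) ^ α := by ring
    _ = Real.Gamma ((n : ℝ) + 1 - α) * ((n : ℝ) + 1 - α) ^ α := by rw [h2]
    _ < _ := mul_lt_mul_of_pos_left
        (Real.rpow_lt_rpow hs.le (by linarith) hα0) hG

lemma gw_tendsto (α : ℝ) (hα0 : 0 < α) (hα1 : α < 1) :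
    Filter.Tendsto (fun n : ℕ => ∑ k ∈ Finset.range (n + 1), grunwaldWeight α k)
      Filter.atTop (nhds 0) := by
  have h1 : Filter.Tendsto (fun n : ℕ => ((n : ℝ) + 1) ^ (-α)) Filter.atTop (nhds 0) :=
    (tendsto_rpow_neg_atTop hα0).comp
      (Filter.tendsto_atTop_add_const_right _ _ tendsto_natCast_atTop_atTop)
  refine squeeze_zero (fun n => (gw_sum_pos α hα1 n).le) (fun n => ?_) h1
  have hp : (0 : ℝ) < (n : ℝ) + 1 := by positivity
  rw [Real.rpow_neg hp.le, ← one_div, le_div_iff₀ (by positivity)]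
  exact gw_upper α hα0 hα1 n

theorem grunwald_weights_partial_sum_bounds (α : ℝ) (hα0 : 0 < α) (hα1 : α < 1) :
    ∀ n : ℕ, 1 ≤ n →
      (∑ k ∈ Finset.range n, grunwaldWeight α k) =
        -∑' k : ℕ, grunwaldWeight α (n + k) ∧
      1 / ((n : ℝ) ^ α * Real.Gamma (1 - α)) <
        ∑ k ∈ Finset.range n, grunwaldWeight α k ∧
      (∑ k ∈ Finset.range n, grunwaldWeight α k) ≤ 1 / (n : ℝ) ^ α := by
  intro n hn
  obtain ⟨m, rfl⟩ : ∃ m, n = m + 1 := ⟨n - 1, by omega⟩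
  have hp : (0 : ℝ) < (m : ℝ) + 1 := by positivity
  refine ⟨?_, ?_, ?_⟩
  · rw [← tsum_neg]
    symm
    apply HasSum.tsum_eq
    rw [hasSum_iff_tendsto_nat_of_nonneg]
    · have ht := (gw_tendsto α hα0 hα1).comp (Filter.tendsto_add_atTop_nat m)
      have ht2 := ht.const_sub (∑ k ∈ Finset.range (m + 1), grunwaldWeight α k)
      rw [sub_zero] at ht2
      refine ht2.congr (fun N => ?_)
      simp only [Function.comp]
      rw [show N + m + 1 = (m + 1) + N by ring, Finset.sum_range_add _ (m + 1) N, Finset.sum_neg_distrib]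
      ring
    · intro i
      have h := gw_sum α (m + i)
      have hS := gw_sum_pos α hα1 (m + i)
      have hq : (0 : ℝ) < ((m + i : ℕ) : ℝ) + 1 := by positivity
      rw [show m + 1 + i = m + i + 1 by ring]
      by_contra hc
      push Not at hc
      have h3 : 0 < grunwaldWeight α (m + i + 1) := by linarith
      nlinarith [mul_pos hq h3, mul_pos hα0 hS]
  · rw [gw_sum_Gamma α hα1]
    push_cast
    have hG := Real.Gamma_pos_of_pos (s := 1 - α) (by linarith)
    have hG2 := Real.Gamma_pos_of_pos hp
    have hq : 0 < ((m : ℝ) + 1) ^ α := by positivity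
    rw [div_lt_div_iff₀ (by positivity) (by positivity)]
    nlinarith [mul_lt_mul_of_pos_right (gw_lower α hα0 hα1 m) hG]
  · push_cast
    rw [le_div_iff₀ (by positivity)]
    exact gw_upper α hα0 hα1 m
end

section
/- Let 0 < α < 1 and define the Grünwald weights w_k = (-1)^k · C(α, k). Let (a_n)_{n≥0} be a sequence of non-negative real numbers satisfying, for every n ≥ 1, a_n ≤ (Σ_{k=0}^{n-1} w_k) · a_0 − Σ_{k=1}^{n-1} w_k · a_{n-k}. Then a_n ≤ a_0 for every n ≥ 1. -/
theorem grunwaldWeight_zero (α : ℝ) : grunwaldWeight α 0 = 1 := by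
  simp [grunwaldWeight]

theorem grunwaldWeight_succ (α : ℝ) (k : ℕ) :
    grunwaldWeight α (k + 1) = grunwaldWeight α k * (((k : ℝ) - α) / ((k : ℝ) + 1)) := by
  have h1 : ((k : ℝ) + 1) ≠ 0 := by positivity
  have h2 : (k.factorial : ℝ) ≠ 0 := by positivity
  simp only [grunwaldWeight, Finset.prod_range_succ, Nat.factorial_succ, pow_succ]
  push_cast
  field_simp
  ring

theorem grunwaldWeight_succ_nonpos (α : ℝ) (hα0 : 0 < α) (hα1 : α < 1) (k : ℕ) :
    grunwaldWeight α (k + 1) ≤ 0 := by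
  induction k with
  | zero =>
    rw [grunwaldWeight_succ, grunwaldWeight_zero]
    norm_num
    exact hα0.le
  | succ k ih =>
    rw [grunwaldWeight_succ]
    refine mul_nonpos_of_nonpos_of_nonneg ih ?_
    have hk : (0 : ℝ) ≤ k := Nat.cast_nonneg k
    push_cast
    exact div_nonneg (by linarith) (by linarith)

/-- Discrete stability: if `(a_n)` is non-negative and satisfies
`a_n ≤ (Σ_{k=0}^{n-1} w_k) a_0 - Σ_{k=1}^{n-1} w_k a_{n-k}` for all `n ≥ 1`,
then `a_n ≤ a_0` for all `n ≥ 1`. -/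
theorem grunwald_recursion_stability
    (α : ℝ) (hα0 : 0 < α) (hα1 : α < 1)
    (a : ℕ → ℝ) (ha : ∀ n, 0 ≤ a n)
    (hrec : ∀ n : ℕ, 1 ≤ n →
      a n ≤ (∑ k ∈ Finset.range n, grunwaldWeight α k) * a 0 -
        ∑ k ∈ Finset.Icc 1 (n - 1), grunwaldWeight α k * a (n - k)) :
    ∀ n : ℕ, 1 ≤ n → a n ≤ a 0 := by
  intro n
  induction n using Nat.strong_induction_on with
  | _ n ih =>
  intro hn
  have h := hrec n hn
  have hsum : ∑ k ∈ Finset.range n, grunwaldWeight α k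
      = 1 + ∑ k ∈ Finset.Icc 1 (n - 1), grunwaldWeight α k := by
    have e : Finset.range n = insert 0 (Finset.Icc 1 (n - 1)) := by
      ext x
      simp only [Finset.mem_range, Finset.mem_insert, Finset.mem_Icc]
      omega
    rw [e, Finset.sum_insert (by simp), grunwaldWeight_zero]
  have hle : ∑ k ∈ Finset.Icc 1 (n - 1), grunwaldWeight α k * a 0
      ≤ ∑ k ∈ Finset.Icc 1 (n - 1), grunwaldWeight α k * a (n - k) := by
    refine Finset.sum_le_sum fun k hk => ?_
    rw [Finset.mem_Icc] at hk
    obtain ⟨j, rfl⟩ : ∃ j, k = j + 1 := ⟨k - 1, by omega⟩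
    exact mul_le_mul_of_nonpos_left (ih _ (by omega) (by omega))
      (grunwaldWeight_succ_nonpos α hα0 hα1 j)
  rw [← Finset.sum_mul] at hle
  rw [hsum] at h
  linarith
end
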